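/- arXiv:1105.2363 — 2 statements merged into one kernel-verified Lean document; each statement's English description precedes it below -/
import Mathlib

section
/- Assume m ≥ 3, ρ < 4π, ρ > 4π((1 + α_i) + (1 + α_j)) for every pair of indices 1 ≤ i < j ≤ 3, and ρ < 4π((1 + α_1) + (1 + α_2) + (1 + α_3)). Then Σ_{ρ,α}, endowed with the weak topology, is not contractible (it is a finite graph containing the closed loop formed by the three segments of probability measures joining δ_{p_1}, δ_{p_2}, δ_{p_3}). -/
/-!
When `ρ ≤ 4π`, every formal barycenter is carried by the finite set of singular points, so the
masses `u = μ {p i}` and `v = μ {p j}` are continuous on `Σ_{ρ,α}`. If the edge `{p i, p j}` is a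
maximal admissible support, then `u v = 0` or `u + v = 1` at every barycenter, and collapsing the
locus `u v = 0` to a point while reading `u` modulo `1` elsewhere gives a continuous map to the
circle. The edge from `δ_{p i}` to `δ_{p j}` wraps once around the circle, whereas the detour
through `δ_{p k}` is sent to the base point. Lifting to `ℝ`, the two paths are not homotopic.
-/

open MeasureTheory Metric
open scoped NNReal ENNReal BigOperators Classical

variable {X : Type*}

/-- The weighted cardinality function `χ` (for `p` injective). -/
noncomputable def chi {m : ℕ} (p : Fin m → X) (α : Fin m → ℝ) (q : X) : ℝ :=
  1 + ∑ j, if p j = q then α j else 0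

/-- The space of formal barycenters `Σ_{ρ,α}`, as a set of probability measures (endowed,
as a subspace of `ProbabilityMeasure X`, with the topology of weak convergence). -/
noncomputable def Bar [MetricSpace X] [MeasurableSpace X] {m : ℕ} (p : Fin m → X)
    (α : Fin m → ℝ) (ρ : ℝ) : Set (ProbabilityMeasure X) :=
  {μ | ∃ (J : Finset X) (t : X → ℝ≥0),
    (∑ q ∈ J, t q) = 1 ∧
    4 * Real.pi * (∑ q ∈ J, chi p α q) < ρ ∧
    (μ : Measure X) = ∑ q ∈ J, ((t q : ℝ≥0∞) • Measure.dirac q)}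

open Set unitInterval

section CoveringMap

variable {E B Y : Type*} [TopologicalSpace E] [TopologicalSpace B] [TopologicalSpace Y]

theorem lift_apply_one_eq_of_simplyConnectedSpace [SimplyConnectedSpace Y] {q : E → B}
    (hq : IsCoveringMap q) (F : C(Y, B)) {a b : Y} (γ₀ γ₁ : Path a b) {Γ₀ Γ₁ : C(I, E)}
    (h₀ : ∀ t, q (Γ₀ t) = F (γ₀ t)) (h₁ : ∀ t, q (Γ₁ t) = F (γ₁ t)) (h : Γ₀ 0 = Γ₁ 0) :
    Γ₀ 1 = Γ₁ 1 := by
  have hF := ContinuousMap.HomotopicRel.comp_continuousMap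
    (SimplyConnectedSpace.paths_homotopic γ₀ γ₁) F
  have e₀ : ContinuousMap.comp ⟨q, hq.continuous⟩ Γ₀ = F.comp γ₀.toContinuousMap :=
    ContinuousMap.ext h₀
  have e₁ : ContinuousMap.comp ⟨q, hq.continuous⟩ Γ₁ = F.comp γ₁.toContinuousMap :=
    ContinuousMap.ext h₁
  rw [← e₀, ← e₁] at hF
  obtain ⟨H⟩ := (hq.homotopicRel_iff_comp ⟨0, by simp, h⟩).2 hF
  exact (H.eq_fst 0 (by simp)).symm.trans (H.eq_snd 0 (by simp))

end CoveringMap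

section EdgeCollapse

variable {Y : Type*} {u v : Y → ℝ}

/-- The map to the circle collapsing the locus `u * v = 0` to the base point. On the locus
`u + v = 1`, the edge with barycentric coordinates `u` and `v`, it is `u` modulo `1`; elsewhere
its value is of no interest. -/
noncomputable def edgeCollapse (u v : Y → ℝ) (y : Y) : UnitAddCircle :=
  if u y * v y = 0 then 0 else (u y : UnitAddCircle)

lemma edgeCollapse_of_mul_eq_zero {y : Y} (h : u y * v y = 0) : edgeCollapse u v y = 0 :=
  if_pos h

lemma edgeCollapse_of_add_eq_one {y : Y} (h : u y + v y = 1) : edgeCollapse u v y = u y := by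
  by_cases huv : u y * v y = 0
  · rw [edgeCollapse_of_mul_eq_zero huv]
    rcases mul_eq_zero.1 huv with hu | hv
    · rw [hu, AddCircle.coe_zero]
    · rw [show u y = 1 by linarith, AddCircle.coe_period]
  · exact if_neg huv

variable [TopologicalSpace Y]

lemma continuous_edgeCollapse (hu : Continuous u) (hv : Continuous v)
    (h : ∀ y, u y * v y = 0 ∨ u y + v y = 1) : Continuous (edgeCollapse u v) := by
  have h_collapsed : ContinuousOn (edgeCollapse u v) {y | u y * v y = 0} :=
    continuousOn_const.congr fun _ hy ↦ edgeCollapse_of_mul_eq_zero hy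
  have h_edge : ContinuousOn (edgeCollapse u v) {y | u y + v y = 1} :=
    ((AddCircle.continuous_mk' 1).comp hu).continuousOn.congr
      fun _ hy ↦ edgeCollapse_of_add_eq_one hy
  rw [← continuousOn_univ, ← eq_univ_of_forall h]
  exact h_collapsed.union_of_isClosed h_edge (isClosed_eq (hu.mul hv) continuous_const)
    (isClosed_eq (hu.add hv) continuous_const)

theorem not_simplyConnectedSpace_of_edge (hu : Continuous u) (hv : Continuous v)
    (h : ∀ y, u y * v y = 0 ∨ u y + v y = 1) {a b : Y} (γ₀ γ₁ : Path a b)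
    (h₀ : ∀ t, u (γ₀ t) + v (γ₀ t) = 1) (h₁ : ∀ t, u (γ₁ t) * v (γ₁ t) = 0)
    (hab : u a ≠ u b) : ¬ SimplyConnectedSpace Y := by
  intro _
  let F : C(Y, UnitAddCircle) := ⟨edgeCollapse u v, continuous_edgeCollapse hu hv h⟩
  have ha : (u a : UnitAddCircle) = 0 := by
    rw [← edgeCollapse_of_add_eq_one (by simpa using h₀ 0),
      edgeCollapse_of_mul_eq_zero (by simpa using h₁ 0)]
  have hlift := lift_apply_one_eq_of_simplyConnectedSpace (AddCircle.isCoveringMap_coe (1 : ℝ))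
    F γ₀ γ₁ (Γ₀ := ⟨fun t ↦ u (γ₀ t), hu.comp γ₀.continuous⟩) (Γ₁ := .const I (u a))
    (fun t ↦ (edgeCollapse_of_add_eq_one (h₀ t)).symm)
    (fun t ↦ ha.trans (edgeCollapse_of_mul_eq_zero (h₁ t)).symm) (by simp)
  exact hab (by simpa using hlift.symm)

end EdgeCollapse

section Paths

variable {Y : Type*} [TopologicalSpace Y] {x y z : Y}

/-- A path all of whose points lie in `S`, as a path in the subtype `S`. -/
def pathCodRestrict {S : Set Y} (γ : Path x y) (h : ∀ t, γ t ∈ S) :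
    Path (⟨x, by simpa using h 0⟩ : S) ⟨y, by simpa using h 1⟩ where
  toFun t := ⟨γ t, h t⟩
  continuous_toFun := γ.continuous.subtype_mk h
  source' := Subtype.ext γ.source
  target' := Subtype.ext γ.target

lemma forall_path_trans_apply {P : Y → Prop} {γ : Path x y} {γ' : Path y z}
    (h : ∀ t, P (γ t)) (h' : ∀ t, P (γ' t)) (t : I) : P ((γ.trans γ') t) := by
  rw [Path.trans_apply]
  split_ifs
  exacts [h _, h' _]

end Paths

section MeasureSegment

variable [TopologicalSpace X] [MeasurableSpace X] [OpensMeasurableSpace X]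

/-- The segment `t ↦ (1 - t) μ + t ν` as a path in the space of probability measures. -/
noncomputable def measureSegment (μ ν : ProbabilityMeasure X) : Path μ ν where
  toFun t := ⟨toNNReal t • (ν : Measure X) + toNNReal (σ t) • (μ : Measure X), inferInstance⟩
  continuous_toFun := by
    refine ProbabilityMeasure.continuous_iff_forall_continuous_integral.2 fun f ↦ ?_
    have hf (κ : ProbabilityMeasure X) (c : ℝ≥0) : Integrable f (c • (κ : Measure X)) :=
      (f.integrable κ).smul_measure_nnreal
    simp only [ProbabilityMeasure.coe_mk, integral_add_measure (hf _ _) (hf _ _),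
      integral_smul_nnreal_measure]
    fun_prop
  source' := by ext; simp
  target' := by ext; simp

lemma ae_measureSegment {μ ν : ProbabilityMeasure X} {P : X → Prop}
    (hμ : ∀ᵐ x ∂(μ : Measure X), P x) (hν : ∀ᵐ x ∂(ν : Measure X), P x) (t : I) :
    ∀ᵐ x ∂(measureSegment μ ν t : Measure X), P x :=
  ae_add_measure_iff.2 ⟨Measure.ae_smul_measure hν _, Measure.ae_smul_measure hμ _⟩

lemma ae_measureSegment_diracProba [MeasurableSingletonClass X] (a b : X) (t : I) :
    ∀ᵐ x ∂(measureSegment (diracProba a) (diracProba b) t : Measure X), x = a ∨ x = b :=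
  ae_measureSegment (by simp [diracProba, ae_dirac_eq]) (by simp [diracProba, ae_dirac_eq]) t

end MeasureSegment

section Masses

variable [MeasurableSpace X]

lemma measureReal_singleton_eq_zero {μ : Measure X} {P : X → Prop} (h : ∀ᵐ x ∂μ, P x) {a : X}
    (ha : ¬ P a) : μ.real {a} = 0 := by
  have hP : μ {x | ¬ P x} = 0 := h
  simp [measureReal_def, measure_mono_null (singleton_subset_iff.2 ha) hP]

lemma measureReal_singleton_add_singleton [MeasurableSingletonClass X] {μ : Measure X}
    [IsProbabilityMeasure μ] {a b : X} (hab : a ≠ b) (h : ∀ᵐ x ∂μ, x = a ∨ x = b) :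
    μ.real {a} + μ.real {b} = 1 := by
  have hμ : μ ({a} ∪ {b}) = 1 := (mem_ae_iff_prob_eq_one (by measurability)).1 h
  rw [← measureReal_union (disjoint_singleton.2 hab) (measurableSet_singleton b), measureReal_def,
    hμ, ENNReal.toReal_one]

variable [TopologicalSpace X] [T35Space X] [OpensMeasurableSpace X]
  {S : Set (ProbabilityMeasure X)} {F : Set X}

lemma continuousOn_measureReal_singleton (hF : F.Finite)
    (hS : ∀ μ ∈ S, ∀ᵐ x ∂(μ : Measure X), x ∈ F) (a : X) :
    ContinuousOn (fun μ : ProbabilityMeasure X ↦ (μ : Measure X).real {a}) S := by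
  obtain ⟨f, hfa, hfF⟩ := CompletelyRegularSpace.exists_BCNN
    (hF.subset (sdiff_subset (t := {a}))).isClosed (x := a) (by simp)
  have hf : Continuous fun μ : ProbabilityMeasure X ↦ ∫⁻ x, f x ∂(μ : Measure X) :=
    ProbabilityMeasure.continuous_lintegral_boundedContinuousFunction f
  have hf_top (μ : ProbabilityMeasure X) : ∫⁻ x, f x ∂(μ : Measure X) ≠ ∞ :=
    (f.lintegral_lt_top_of_nnreal _).ne
  refine (ENNReal.continuousOn_toReal.comp_continuous hf hf_top).continuousOn.congr
    fun μ hμ ↦ congrArg ENNReal.toReal ?_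
  rw [← lintegral_indicator_one (measurableSet_singleton a)]
  refine lintegral_congr_ae ((hS μ hμ).mono fun x hx ↦ ?_)
  by_cases hxa : x = a
  · simp [hxa, hfa]
  · simp [hxa, hfF x ⟨hx, hxa⟩]

theorem not_isSimplyConnected_of_dirac_triangle (hF : F.Finite)
    (hS : ∀ μ ∈ S, ∀ᵐ x ∂(μ : Measure X), x ∈ F) {a b c : X} (hab : a ≠ b) (hac : a ≠ c)
    (hbc : b ≠ c)
    (hedge : ∀ μ ∈ S, (μ : Measure X).real {a} = 0 ∨ (μ : Measure X).real {b} = 0 ∨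
      ∀ᵐ x ∂(μ : Measure X), x = a ∨ x = b)
    (hSab : ∀ t, measureSegment (diracProba a) (diracProba b) t ∈ S)
    (hSac : ∀ t, measureSegment (diracProba a) (diracProba c) t ∈ S)
    (hSbc : ∀ t, measureSegment (diracProba b) (diracProba c) t ∈ S) :
    ¬ IsSimplyConnected S := by
  let mass (x : X) (μ : ProbabilityMeasure X) : ℝ := (μ : Measure X).real {x}
  have hmass (x : X) : Continuous (S.domRestrict (mass x)) :=
    (continuousOn_measureReal_singleton hF hS x).domRestrict
  have hcollapse (μ : S) : mass a μ * mass b μ = 0 ∨ mass a μ + mass b μ = 1 := by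
    rcases hedge μ μ.2 with ha | hb | h
    · exact .inl (mul_eq_zero_of_left ha _)
    · exact .inl (mul_eq_zero_of_right _ hb)
    · exact .inr (measureReal_singleton_add_singleton hab h)
  let detour := (measureSegment (diracProba a) (diracProba c)).trans
    (measureSegment (diracProba b) (diracProba c)).symm
  have hSdetour : ∀ t, detour t ∈ S := forall_path_trans_apply hSac fun t ↦ hSbc (σ t)
  have hdetour : ∀ t, mass a (detour t) * mass b (detour t) = 0 :=
    forall_path_trans_apply (P := fun μ ↦ mass a μ * mass b μ = 0)
      (fun t ↦ mul_eq_zero_of_right _ <| measureReal_singleton_eq_zero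
        (ae_measureSegment_diracProba a c t) (by simp [hab.symm, hbc]))
      (fun t ↦ mul_eq_zero_of_left (measureReal_singleton_eq_zero
        (ae_measureSegment_diracProba b c (σ t)) (by simp [hab, hac])) _)
  exact not_simplyConnectedSpace_of_edge (hmass a) (hmass b) hcollapse
    (pathCodRestrict _ hSab) (pathCodRestrict detour hSdetour)
    (fun t ↦ measureReal_singleton_add_singleton hab (ae_measureSegment_diracProba a b t))
    hdetour (by simp [mass, measureReal_def, Set.domRestrict, hab.symm])

end Masses

section Barycenters

variable {m : ℕ} {p : Fin m → X} {α : Fin m → ℝ} {ρ : ℝ}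

lemma chi_apply (hp : Function.Injective p) (i : Fin m) : chi p α (p i) = 1 + α i := by
  simp [chi, hp.eq_iff]

lemma chi_of_notMem_range {q : X} (hq : q ∉ range p) : chi p α q = 1 := by
  simp_all [chi]

lemma chi_pos (hp : Function.Injective p) (hα : ∀ j, -1 < α j) (q : X) : 0 < chi p α q := by
  by_cases hq : q ∈ range p
  · obtain ⟨j, rfl⟩ := hq
    rw [chi_apply hp]
    linarith [hα j]
  · rw [chi_of_notMem_range hq]
    exact one_pos

lemma mem_range_of_sum_chi_lt (hp : Function.Injective p) (hα : ∀ j, -1 < α j)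
    (hρ : ρ ≤ 4 * Real.pi) {J : Finset X} (hJ : 4 * Real.pi * ∑ q ∈ J, chi p α q < ρ) {q : X}
    (hq : q ∈ J) : q ∈ range p := by
  by_contra hqp
  have h_one : 1 ≤ ∑ q ∈ J, chi p α q :=
    (chi_of_notMem_range hqp).ge.trans
      (Finset.single_le_sum (fun x _ ↦ (chi_pos hp hα x).le) hq)
  nlinarith [Real.pi_pos]

lemma eq_or_eq_of_sum_chi_lt (hp : Function.Injective p) (hα : ∀ j, -1 < α j)
    (hρ : ρ ≤ 4 * Real.pi) {i j : Fin m} (hij : i ≠ j)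
    (hmax : ∀ l, l ≠ i → l ≠ j → ρ ≤ 4 * Real.pi * ((1 + α i) + (1 + α j) + (1 + α l)))
    {J : Finset X} (hJ : 4 * Real.pi * ∑ q ∈ J, chi p α q < ρ) (hi : p i ∈ J) (hj : p j ∈ J)
    {q : X} (hq : q ∈ J) : q = p i ∨ q = p j := by
  obtain ⟨l, rfl⟩ := mem_range_of_sum_chi_lt hp hα hρ hJ hq
  simp only [hp.eq_iff]
  by_contra! hl
  have h_triple : (1 + α i) + (1 + α j) + (1 + α l) ≤ ∑ q ∈ J, chi p α q := by
    calc (1 + α i) + (1 + α j) + (1 + α l) = ∑ q ∈ {p i, p j, p l}, chi p α q := by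
          rw [Finset.sum_insert (by simp [hp.eq_iff, hij, hl.1.symm]),
            Finset.sum_pair (hp.ne hl.2.symm)]
          simp only [chi_apply hp, add_assoc]
      _ ≤ ∑ q ∈ J, chi p α q :=
          Finset.sum_le_sum_of_subset_of_nonneg (by simp [Finset.insert_subset_iff, *])
            fun q _ _ ↦ (chi_pos hp hα q).le
  nlinarith [hmax l hl.1 hl.2, Real.pi_pos]

variable [MetricSpace X] [MeasurableSpace X]

lemma mem_bar_iff [MeasurableSingletonClass X] {μ : ProbabilityMeasure X} :
    μ ∈ Bar p α ρ ↔ ∃ J : Finset X, 4 * Real.pi * ∑ q ∈ J, chi p α q < ρ ∧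
      ∀ᵐ x ∂(μ : Measure X), x ∈ J := by
  constructor
  · rintro ⟨J, t, -, hJ, hμ⟩
    refine ⟨J, hJ, ?_⟩
    rw [hμ, ae_finsetSum_measure_iff]
    exact fun q hq ↦ Measure.ae_smul_measure (by simpa [ae_dirac_eq] using hq) _
  · rintro ⟨J, hJ, hμ⟩
    refine ⟨J, fun q ↦ μ {q}, ?_, hJ, ?_⟩
    · have h_mass : ∑ q ∈ J, (μ : Measure X) {q} = 1 := by
        rw [sum_measure_singleton]
        exact (mem_ae_iff_prob_eq_one J.measurableSet).1 hμ
      simp only [← ProbabilityMeasure.ennreal_coeFn_eq_coeFn_toMeasure] at h_mass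
      exact_mod_cast h_mass
    · simpa using Measure.ae_mem_finset_iff.1 hμ

lemma measureSegment_diracProba_mem_bar [OpensMeasurableSpace X] {a b : X} (hab : a ≠ b)
    (h : 4 * Real.pi * (chi p α a + chi p α b) < ρ) (t : I) :
    measureSegment (diracProba a) (diracProba b) t ∈ Bar p α ρ :=
  mem_bar_iff.2 ⟨{a, b}, by rwa [Finset.sum_pair hab],
    by simpa using ae_measureSegment_diracProba a b t⟩

theorem barycenters_loop_not_contractible_general [OpensMeasurableSpace X]
    (hp : Function.Injective p) (hα : ∀ j, -1 < α j) (hρ : ρ ≤ 4 * Real.pi) {i j k : Fin m}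
    (hij : i ≠ j) (hik : i ≠ k) (hjk : j ≠ k)
    (hρij : 4 * Real.pi * ((1 + α i) + (1 + α j)) < ρ)
    (hρik : 4 * Real.pi * ((1 + α i) + (1 + α k)) < ρ)
    (hρjk : 4 * Real.pi * ((1 + α j) + (1 + α k)) < ρ)
    (hmax : ∀ l, l ≠ i → l ≠ j → ρ ≤ 4 * Real.pi * ((1 + α i) + (1 + α j) + (1 + α l))) :
    ¬ IsSimplyConnected (Bar p α ρ) := by
  simp only [← chi_apply hp (α := α)] at hρij hρik hρjk
  refine not_isSimplyConnected_of_dirac_triangle (finite_range p) ?_ (hp.ne hij) (hp.ne hik)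
    (hp.ne hjk) ?_ (measureSegment_diracProba_mem_bar (hp.ne hij) hρij)
    (measureSegment_diracProba_mem_bar (hp.ne hik) hρik)
    (measureSegment_diracProba_mem_bar (hp.ne hjk) hρjk)
  · intro μ hμ
    obtain ⟨J, hJ, hμJ⟩ := mem_bar_iff.1 hμ
    exact hμJ.mono fun q ↦ mem_range_of_sum_chi_lt hp hα hρ hJ
  · intro μ hμ
    obtain ⟨J, hJ, hμJ⟩ := mem_bar_iff.1 hμ
    by_cases hi : p i ∈ J
    · by_cases hj : p j ∈ J
      · exact .inr (.inr (hμJ.mono fun q ↦ eq_or_eq_of_sum_chi_lt hp hα hρ hij hmax hJ hi hj))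
      · exact .inr (.inl (measureReal_singleton_eq_zero hμJ hj))
    · exact .inl (measureReal_singleton_eq_zero hμJ hi)

end Barycenters

lemma sum_filter_lt_three_le_of_monotone {M : Type*} [AddCommMonoid M] [Preorder M]
    [AddLeftMono M] {m : ℕ} (hm : 3 ≤ m) {f : Fin m → M} (hf : Monotone f) {l : Fin m}
    (h₀ : l ≠ ⟨0, by omega⟩) (h₁ : l ≠ ⟨1, by omega⟩) :
    ∑ i : Fin m with i.val < 3, f i ≤ f ⟨0, by omega⟩ + f ⟨1, by omega⟩ + f l := by
  have h_filter : Finset.univ.filter (fun i : Fin m ↦ (i : ℕ) < 3) =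
      {⟨0, by omega⟩, ⟨1, by omega⟩, ⟨2, by omega⟩} := by
    ext i
    simp only [Finset.mem_filter, Finset.mem_univ, true_and, Finset.mem_insert,
      Finset.mem_singleton, Fin.ext_iff]
    omega
  rw [h_filter, Finset.sum_insert (by simp), Finset.sum_pair (by simp), ← add_assoc]
  refine add_le_add_right (hf ?_) _
  simp only [ne_eq, Fin.ext_iff, Fin.le_def] at *
  omega

/-- if `m ≥ 3`, `ρ < 4π`, `ρ > 4π((1+α_i)+(1+α_j))` for all `1 ≤ i < j ≤ 3`
and `ρ < 4π((1+α_1)+(1+α_2)+(1+α_3))`, then `Σ_{ρ,α}` with the weak topology is not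
contractible. -/
theorem barycenters_loop_not_contractible
    [MetricSpace X] [CompactSpace X] [Infinite X] [MeasurableSpace X] [BorelSpace X]
    {m : ℕ} (hm : 3 ≤ m) (p : Fin m → X) (hp : Function.Injective p)
    (α : Fin m → ℝ) (hα : ∀ j, -1 < α j ∧ α j < 0) (hmono : Monotone α)
    (ρ : ℝ) (hρ : 0 < ρ)
    (hρ4 : ρ < 4 * Real.pi)
    (hpair : ∀ i j : Fin m, (i : ℕ) < (j : ℕ) → (j : ℕ) < 3 →
      4 * Real.pi * ((1 + α i) + (1 + α j)) < ρ)
    (htriple : ρ < 4 * Real.pi * ∑ i ∈ Finset.univ.filter (fun i : Fin m => (i : ℕ) < 3),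
      (1 + α i)) :
    ¬ ContractibleSpace ↥(Bar p α ρ) := by
  have hmax (l : Fin m) (h₀ : l ≠ ⟨0, by omega⟩) (h₁ : l ≠ ⟨1, by omega⟩) :=
    htriple.le.trans <| mul_le_mul_of_nonneg_left
      (sum_filter_lt_three_le_of_monotone hm (hmono.const_add 1) h₀ h₁) (by positivity)
  exact fun _ ↦ barycenters_loop_not_contractible_general (k := ⟨2, by omega⟩) hp
    (fun j ↦ (hα j).1) hρ4.le (by simp) (by simp) (by simp) (hpair _ _ (by simp) (by simp))
    (hpair _ _ (by simp) (by simp)) (hpair _ _ (by simp) (by simp)) hmax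
    (SimplyConnectedSpace.ofContractible _)
end

section
/- Assume 4π(1 + α_1) < ρ and that Σ_{ρ,α} is p_1-stable, i.e. for every σ ∈ Σ_{ρ,α} and every t ∈ [0, 1] the measure (1 − t)σ + t δ_{p_1} belongs to Σ_{ρ,α}. Then Σ_{ρ,α}, endowed with the weak topology, is contractible: the map H : Σ_{ρ,α} × [0, 1] → Σ_{ρ,α} defined by H(σ, t) = (1 − t)σ + t δ_{p_1} is continuous, H(σ, 0) = σ and H(σ, 1) = δ_{p_1} for every σ, so Σ_{ρ,α} deformation-retracts onto the point δ_{p_1}. -/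
open MeasureTheory Metric
open scoped NNReal ENNReal BigOperators Classical

variable {X : Type*}

/-!
The weak topology on probability measures is induced from the topological `ℝ≥0`-module of finite
measures, so the convex combination `(1 - t) μ + t ν` is jointly continuous in `(μ, ν, t)`. Hence a
set of probability measures that contains the segment from each of its elements to `ν` is
contracted onto `ν` along these segments, exactly as for a star-convex set in a topological vector
space.
-/

open unitInterval

section ConvexCombination

variable [MeasurableSpace X]

/-- The convex combination `(1 - t) μ + t ν` of two probability measures, as a probability measure.
It parametrizes by `t ∈ [0, 1]` the segment from `μ` to `ν`. -/
noncomputable def convexCombination (μ ν : ProbabilityMeasure X) (t : I) : ProbabilityMeasure X :=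
  ⟨toNNReal t • (ν : Measure X) + toNNReal (σ t) • (μ : Measure X), inferInstance⟩

theorem toFiniteMeasure_convexCombination (μ ν : ProbabilityMeasure X) (t : I) :
    (convexCombination μ ν t).toFiniteMeasure =
      toNNReal t • ν.toFiniteMeasure + toNNReal (σ t) • μ.toFiniteMeasure :=
  rfl

theorem coe_convexCombination (μ ν : ProbabilityMeasure X) (t : I) :
    (convexCombination μ ν t : Measure X) =
      ENNReal.ofReal (1 - t) • (μ : Measure X) + ENNReal.ofReal t • (ν : Measure X) := by
  have ofReal_coe (s : I) : ENNReal.ofReal s = toNNReal s :=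
    ENNReal.ofReal_eq_coe_nnreal s.2.1
  rw [← coe_symm_eq, ofReal_coe, ofReal_coe, add_comm]
  rfl

@[simp]
theorem convexCombination_zero (μ ν : ProbabilityMeasure X) : convexCombination μ ν 0 = μ :=
  Subtype.ext <| by simp [coe_convexCombination]

@[simp]
theorem convexCombination_one (μ ν : ProbabilityMeasure X) : convexCombination μ ν 1 = ν :=
  Subtype.ext <| by simp [coe_convexCombination]

theorem continuous_convexCombination [TopologicalSpace X] [OpensMeasurableSpace X] :
    Continuous fun z : ProbabilityMeasure X × ProbabilityMeasure X × I ↦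
      convexCombination z.1 z.2.1 z.2.2 := by
  have hcoe := ProbabilityMeasure.toFiniteMeasure_continuous (Ω := X)
  rw [(ProbabilityMeasure.toFiniteMeasure_isEmbedding X).continuous_iff]
  simp only [Function.comp_def, toFiniteMeasure_convexCombination]
  fun_prop

end ConvexCombination

section StarShaped

variable [MeasurableSpace X] {ν : ProbabilityMeasure X} {S : Set (ProbabilityMeasure X)}

/-- A set `S` of probability measures is star-shaped at `ν` if it contains the segment from each of
its elements to `ν`. The `p₁`-stability of `Σ_{ρ,α}` is the case `ν = δ_{p₁}`. -/
def IsStarShapedAt (ν : ProbabilityMeasure X) (S : Set (ProbabilityMeasure X)) : Prop :=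
  ∀ μ ∈ S, ∀ t : I, convexCombination μ ν t ∈ S

theorem isStarShapedAt_iff :
    IsStarShapedAt ν S ↔ ∀ μ ∈ S, ∀ t : ℝ, 0 ≤ t → t ≤ 1 → ∀ ξ : ProbabilityMeasure X,
      (ξ : Measure X) = ENNReal.ofReal (1 - t) • (μ : Measure X)
          + ENNReal.ofReal t • (ν : Measure X) →
      ξ ∈ S := by
  refine ⟨fun h μ hμ t h0 h1 ξ hξ ↦ ?_, fun h μ hμ t ↦
    h μ hμ t t.2.1 t.2.2 _ (coe_convexCombination μ ν t)⟩
  have : ξ = convexCombination μ ν ⟨t, h0, h1⟩ :=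
    Subtype.ext <| hξ.trans (coe_convexCombination μ ν ⟨t, h0, h1⟩).symm
  exact this ▸ h μ hμ ⟨t, h0, h1⟩

theorem IsStarShapedAt.mem (h : IsStarShapedAt ν S) (hne : S.Nonempty) : ν ∈ S := by
  obtain ⟨μ, hμ⟩ := hne
  simpa using h μ hμ 1

theorem IsStarShapedAt.contractibleSpace [TopologicalSpace X] [OpensMeasurableSpace X]
    (h : IsStarShapedAt ν S) (hne : S.Nonempty) : ContractibleSpace S := by
  let H : I × S → S := fun z ↦ ⟨convexCombination z.2 ν z.1, h z.2 z.2.2 z.1⟩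
  have hH : Continuous H := by
    refine Continuous.subtype_mk ?_ _
    exact continuous_convexCombination.comp
      (f := fun z : I × S ↦ ((z.2 : ProbabilityMeasure X), ν, z.1)) (by fun_prop)
  have H_zero (μ : S) : H (0, μ) = μ := Subtype.ext (convexCombination_zero _ _)
  have H_one (μ : S) : H (1, μ) = ⟨ν, h.mem hne⟩ := Subtype.ext (convexCombination_one _ _)
  exact (contractible_iff_id_nullhomotopic S).2
    ⟨⟨ν, h.mem hne⟩, ⟨⟨⟨H, hH⟩, H_zero, H_one⟩⟩⟩

end StarShaped

section FormalBarycenters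

variable {m : ℕ} {p : Fin m → X} {α : Fin m → ℝ} {ρ : ℝ}

theorem chi_apply_of_injective (hp : Function.Injective p) (j : Fin m) :
    chi p α (p j) = 1 + α j := by
  simp [chi, hp.eq_iff]

variable [MetricSpace X] [MeasurableSpace X] {a : X}

theorem diracProba_mem_bar (ha : 4 * Real.pi * chi p α a < ρ) : diracProba a ∈ Bar p α ρ :=
  ⟨{a}, 1, by simp, by simpa using ha, by simp [diracProba]⟩

theorem p1_stable_contractible_general [OpensMeasurableSpace X]
    (hne : (Bar p α ρ).Nonempty)
    (hstab : ∀ μ ∈ Bar p α ρ, ∀ t : ℝ, 0 ≤ t → t ≤ 1 → ∀ ν : ProbabilityMeasure X,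
      (ν : Measure X) = ENNReal.ofReal (1 - t) • (μ : Measure X)
          + ENNReal.ofReal t • Measure.dirac a →
      ν ∈ Bar p α ρ) :
    ContractibleSpace ↥(Bar p α ρ) :=
  (isStarShapedAt_iff (ν := diracProba a).2 hstab).contractibleSpace hne

end FormalBarycenters

/-- if `4π(1+α_1) < ρ` and `Σ_{ρ,α}` is `p_1`-stable (the segment from any
`σ ∈ Σ_{ρ,α}` to `δ_{p_1}` stays in `Σ_{ρ,α}`), then `Σ_{ρ,α}`, with the weak topology,
is contractible. -/
theorem p1_stable_contractible
    [MetricSpace X] [CompactSpace X] [Infinite X] [MeasurableSpace X] [BorelSpace X]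
    {m : ℕ} (hm : 1 ≤ m) (p : Fin m → X) (hp : Function.Injective p)
    (α : Fin m → ℝ) (hα : ∀ j, -1 < α j ∧ α j < 0) (hmono : Monotone α)
    (ρ : ℝ) (hρ : 0 < ρ)
    (hρ1 : 4 * Real.pi * (1 + α ⟨0, hm⟩) < ρ)
    (hstab : ∀ μ ∈ Bar p α ρ, ∀ t : ℝ, 0 ≤ t → t ≤ 1 → ∀ ν : ProbabilityMeasure X,
      (ν : Measure X) = ENNReal.ofReal (1 - t) • (μ : Measure X)
          + ENNReal.ofReal t • Measure.dirac (p ⟨0, hm⟩) →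
      ν ∈ Bar p α ρ) :
    ContractibleSpace ↥(Bar p α ρ) :=
  p1_stable_contractible_general
    ⟨_, diracProba_mem_bar <| by rwa [chi_apply_of_injective hp ⟨0, hm⟩]⟩ hstab
end
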